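/- Fix d ≥ 1. Let E ⊂ ℤ_{≥1} be a finite set with |E| = L, and let P(ω) = Σ_{n ∈ E} G_n(ω), where each G_n is the restriction to the unit sphere S^{2d−1} ⊂ ℂ^d of a homogeneous holomorphic polynomial of degree n on ℂ^d. Then ‖P‖_{L²(S^{2d−1})}² ≤ 144 L ‖ρ ∘ P‖_{L²(S^{2d−1})}², where the L² norms are with respect to the normalized surface measure on S^{2d−1}. -/

import Mathlib

open MeasureTheory

/-- The defect function `ρ(w) = ||1+w| − 1|`. -/
noncomputable def ρ (w : ℂ) : ℝ := |‖1 + w‖ - 1|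

/-- The Euclidean (ℓ²) norm on `ℂ^d`: `‖z‖ = √(Σ_q |z_q|²)`. -/
noncomputable def l2norm {d : ℕ} (z : Fin d → ℂ) : ℝ :=
  Real.sqrt (∑ q, ‖z q‖ ^ 2)

/-- The standard Gaussian probability measure on `ℂ^d`,
`dγ_d(z) = (1/π^d) e^{−‖z‖²} dm(z)`. -/
noncomputable def gaussianCd (d : ℕ) : Measure (Fin d → ℂ) :=
  volume.withDensity fun z =>
    ENNReal.ofReal ((1 / Real.pi ^ d) * Real.exp (-∑ q, ‖z q‖ ^ 2))

/-- The rotation-invariant probability measure `σ_d` on the unit sphere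
`S^{2d−1} = {ω ∈ ℂ^d : ‖ω‖ = 1}`, realized as the pushforward of the Gaussian
measure on `ℂ^d` under the radial normalization `z ↦ z/‖z‖`. -/
noncomputable def sphereMeasure (d : ℕ) : Measure (Fin d → ℂ) :=
  (gaussianCd d).map fun z => (l2norm z)⁻¹ • z

/-! On each orbit `u ↦ uω` of the circle group, `P` becomes the trigonometric polynomial
`p(u) = ∑ uⁿ Gₙ(ω)`. As all degrees are positive, `p` and `p²` have mean zero, and Parseval with
Cauchy–Schwarz gives `‖p‖∞² ≤ L ‖p‖₂²`. If `L ‖p‖₂² ≤ 1/4`, then `|p| ≤ 1/2` and `|1 + p| - 1`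
controls `Re p` up to a quadratic error, while `2 ∫ (Re p)² = ‖p‖₂²` because `∫ p² = 0`.
Otherwise, integrate `2 Re p + |p|² = 2r + r²` with `r = |1 + p| - 1`: since `∫ p = 0`, the left
side gives `‖p‖₂²`, and AM-GM with weight `8L` absorbs the linear term on the right. Averaging
over all orbits gives the estimate on the sphere. Only orthogonality of the characters `u ↦ uⁿ`
and the nontriviality of their pairwise products enter, so any compact group can replace the
circle. -/

open Complex ComplexConjugate TopologicalSpace

section Defect

lemma continuous_ρ : Continuous ρ := by
  unfold ρ
  fun_prop

lemma ρ_le_norm (w : ℂ) : ρ w ≤ ‖w‖ := by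
  simpa [ρ] using abs_norm_sub_norm_le (1 + w) 1

lemma norm_one_add_sq (w : ℂ) : ‖1 + w‖ ^ 2 = 1 + 2 * w.re + ‖w‖ ^ 2 := by
  simp only [← normSq_eq_norm_sq, normSq_add, map_one, one_mul, conj_re]
  ring

lemma re_sq_eq (w : ℂ) : (w ^ 2).re = 2 * w.re ^ 2 - ‖w‖ ^ 2 := by
  rw [← normSq_eq_norm_sq, normSq_apply, sq w, mul_re]
  ring

lemma norm_sq_add_re_sq_le_ρ_sq {w : ℂ} (hw : ‖w‖ ≤ 1 / 2) :
    3 / 4 * ‖w‖ ^ 2 + (w ^ 2).re ≤ 25 / 4 * ρ w ^ 2 := by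
  have hnorm : ‖1 + w‖ ≤ 3 / 2 := by
    have := norm_add_le 1 w
    rw [norm_one] at this
    linarith
  have hfour : ‖w‖ ^ 2 * ‖w‖ ^ 2 ≤ 1 / 4 * ‖w‖ ^ 2 := by
    gcongr
    nlinarith [norm_nonneg w]
  calc 3 / 4 * ‖w‖ ^ 2 + (w ^ 2).re
      ≤ (2 * w.re + ‖w‖ ^ 2) ^ 2 := by
        rw [re_sq_eq]
        nlinarith [sq_nonneg (w.re + ‖w‖ ^ 2)]
    _ = (‖1 + w‖ + 1) ^ 2 * ρ w ^ 2 := by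
        rw [ρ, sq_abs, ← mul_pow]
        congr 1
        linarith [norm_one_add_sq w]
    _ ≤ (3 / 2 + 1) ^ 2 * ρ w ^ 2 := by gcongr
    _ = 25 / 4 * ρ w ^ 2 := by norm_num

lemma two_re_add_norm_sq_le_ρ_sq (w : ℂ) {t : ℝ} (ht : 0 < t) :
    2 * w.re + ‖w‖ ^ 2 ≤ t⁻¹ + (t + 1) * ρ w ^ 2 := by
  set r := ‖1 + w‖ - 1 with hr
  have amgm : 2 * r ≤ t⁻¹ + t * r ^ 2 := by
    have hsq : t⁻¹ + t * r ^ 2 - 2 * r = t * (t⁻¹ - r) ^ 2 := by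
      field_simp
      ring
    have : 0 ≤ t * (t⁻¹ - r) ^ 2 := by positivity
    linarith
  calc 2 * w.re + ‖w‖ ^ 2 = 2 * r + r ^ 2 := by
        rw [hr]
        linarith [norm_one_add_sq w]
    _ ≤ t⁻¹ + (t + 1) * r ^ 2 := by linarith
    _ = t⁻¹ + (t + 1) * ρ w ^ 2 := by rw [ρ, sq_abs]

end Defect

section Moments

variable {Ω : Type*} [MeasurableSpace Ω] {μ : Measure Ω} {p : Ω → ℂ}

lemma integrable_ρ_sq (hp : MemLp p 2 μ) : Integrable (fun t => ρ (p t) ^ 2) μ := by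
  refine MemLp.integrable_sq (hp.mono (continuous_ρ.comp_aestronglyMeasurable hp.1) ?_)
  exact .of_forall fun t => (Real.norm_of_nonneg (abs_nonneg _)).trans_le (ρ_le_norm _)

lemma integral_re_eq_zero (hp : Integrable p μ) (h : ∫ t, p t ∂μ = 0) :
    ∫ t, (p t).re ∂μ = 0 := by
  simpa [h] using reCLM.integral_comp_comm hp

lemma integral_norm_sq_le_of_norm_le_half (hp : MemLp p 2 μ) (h2 : ∫ t, p t ^ 2 ∂μ = 0)
    (hsmall : ∀ᵐ t ∂μ, ‖p t‖ ≤ 1 / 2) :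
    3 / 4 * ∫ t, ‖p t‖ ^ 2 ∂μ ≤ 25 / 4 * ∫ t, ρ (p t) ^ 2 ∂μ := by
  have hnorm : Integrable (fun t => ‖p t‖ ^ 2) μ := hp.norm.integrable_sq
  have hsq : Integrable (fun t => p t ^ 2) μ := by
    simpa only [sq] using! hp.integrable_mul hp
  have hre : Integrable (fun t => (p t ^ 2).re) μ := hsq.re
  calc 3 / 4 * ∫ t, ‖p t‖ ^ 2 ∂μ = ∫ t, 3 / 4 * ‖p t‖ ^ 2 + (p t ^ 2).re ∂μ := by
        rw [integral_add (hnorm.const_mul _) hre, integral_const_mul,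
          integral_re_eq_zero hsq h2, add_zero]
    _ ≤ ∫ t, 25 / 4 * ρ (p t) ^ 2 ∂μ :=
        integral_mono_ae ((hnorm.const_mul _).add hre) ((integrable_ρ_sq hp).const_mul _)
          (hsmall.mono fun _ => norm_sq_add_re_sq_le_ρ_sq)
    _ = 25 / 4 * ∫ t, ρ (p t) ^ 2 ∂μ := integral_const_mul _ _

lemma integral_norm_sq_le_inv_add [IsProbabilityMeasure μ] (hp : MemLp p 2 μ)
    (h1 : ∫ t, p t ∂μ = 0) {t : ℝ} (ht : 0 < t) :
    ∫ x, ‖p x‖ ^ 2 ∂μ ≤ t⁻¹ + (t + 1) * ∫ x, ρ (p x) ^ 2 ∂μ := by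
  have hnorm : Integrable (fun x => ‖p x‖ ^ 2) μ := hp.norm.integrable_sq
  have hint : Integrable p μ := hp.integrable one_le_two
  have hre : Integrable (fun x => 2 * (p x).re) μ := hint.re.const_mul 2
  have hρ := (integrable_ρ_sq hp).const_mul (t + 1)
  calc ∫ x, ‖p x‖ ^ 2 ∂μ = ∫ x, 2 * (p x).re + ‖p x‖ ^ 2 ∂μ := by
        rw [integral_add hre hnorm, integral_const_mul,
          integral_re_eq_zero hint h1, mul_zero, zero_add]
    _ ≤ ∫ x, t⁻¹ + (t + 1) * ρ (p x) ^ 2 ∂μ :=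
        integral_mono (hre.add hnorm) ((integrable_const _).add hρ)
          fun x => two_re_add_norm_sq_le_ρ_sq (p x) ht
    _ = t⁻¹ + (t + 1) * ∫ x, ρ (p x) ^ 2 ∂μ := by
        rw [integral_add (integrable_const _) hρ, integral_const_mul, integral_const,
          probReal_univ, one_smul]

theorem integral_norm_sq_le_of_moments_eq_zero [IsProbabilityMeasure μ]
    (hp : AEStronglyMeasurable p μ) {L : ℝ} (hL : 1 ≤ L)
    (h1 : ∫ t, p t ∂μ = 0) (h2 : ∫ t, p t ^ 2 ∂μ = 0)
    (hsup : ∀ᵐ t ∂μ, ‖p t‖ ^ 2 ≤ L * ∫ t, ‖p t‖ ^ 2 ∂μ) :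
    ∫ t, ‖p t‖ ^ 2 ∂μ ≤ 18 * L * ∫ t, ρ (p t) ^ 2 ∂μ := by
  have hp2 : MemLp p 2 μ := .of_bound hp _ (hsup.mono fun _ => Real.le_sqrt_of_sq_le)
  have hD : 0 ≤ ∫ t, ρ (p t) ^ 2 ∂μ := by positivity
  rcases le_or_gt (L * ∫ t, ‖p t‖ ^ 2 ∂μ) (1 / 4) with hle | hgt
  · have hsmall : ∀ᵐ t ∂μ, ‖p t‖ ≤ 1 / 2 := by
      filter_upwards [hsup] with t ht
      exact abs_le_of_sq_le_sq' (by linarith) (by norm_num) |>.2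
    have := integral_norm_sq_le_of_norm_le_half hp2 h2 hsmall
    nlinarith
  · have hlarge := integral_norm_sq_le_inv_add hp2 h1 (t := 8 * L) (by linarith)
    have hinv : (8 * L)⁻¹ ≤ (∫ t, ‖p t‖ ^ 2 ∂μ) / 2 := by
      rw [inv_le_iff_one_le_mul₀ (by linarith)]
      linarith
    nlinarith

end Moments

section TrigPoly

variable {K ι : Type*} [Group K] [TopologicalSpace K]

/-- The trigonometric polynomial `∑ c_i χ_i` on a topological group, with coefficients `c i`
and unitary characters `χ i`. -/
noncomputable def trigPoly (s : Finset ι) (c : ι → ℂ) (χ : ι → K →ₜ* Circle) (k : K) : ℂ :=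
  ∑ i ∈ s, c i * χ i k


variable (s : Finset ι) (c : ι → ℂ) (χ : ι → K →ₜ* Circle)

lemma continuous_trigPoly : Continuous (trigPoly s c χ) := by
  unfold trigPoly
  fun_prop

lemma norm_trigPoly_le (k : K) : ‖trigPoly s c χ k‖ ≤ ∑ i ∈ s, ‖c i‖ :=
  (norm_sum_le _ _).trans_eq <| by simp only [norm_mul, Circle.norm_coe, mul_one]

lemma trigPoly_sq (k : K) :
    trigPoly s c χ k ^ 2 =
      trigPoly (s ×ˢ s) (fun ij => c ij.1 * c ij.2) (fun ij => χ ij.1 * χ ij.2) k := by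
  simp only [trigPoly, sq, Finset.sum_mul_sum, Finset.sum_product,
    ContinuousMonoidHom.mul_apply, Circle.coe_mul, mul_mul_mul_comm]

lemma ofReal_norm_trigPoly_sq (k : K) :
    ((‖trigPoly s c χ k‖ ^ 2 : ℝ) : ℂ) =
      trigPoly (s ×ˢ s) (fun ij => c ij.1 * conj (c ij.2)) (fun ij => χ ij.1 * (χ ij.2)⁻¹) k := by
  have conj_character (ψ : K →ₜ* Circle) : conj (ψ k : ℂ) = (ψ⁻¹ k : Circle) :=
    (Circle.coe_inv_eq_conj _).symm
  simp only [ofReal_pow, ← mul_conj', trigPoly, map_sum, map_mul, Finset.sum_mul_sum,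
    Finset.sum_product, ContinuousMonoidHom.mul_apply, Circle.coe_mul, conj_character,
    mul_mul_mul_comm]

variable [MeasurableSpace K] (ν : Measure K)

lemma integral_character_eq_zero [MeasurableMul K] [ν.IsMulLeftInvariant] {ψ : K →ₜ* Circle}
    (hψ : ψ ≠ 1) : ∫ k, (ψ k : ℂ) ∂ν = 0 := by
  obtain ⟨a, ha⟩ : ∃ a, ψ a ≠ 1 := by
    by_contra! h
    exact hψ (ContinuousMonoidHom.ext h)
  have hfix : (ψ a : ℂ) * ∫ k, (ψ k : ℂ) ∂ν = ∫ k, (ψ k : ℂ) ∂ν := by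
    rw [← integral_const_mul, ← integral_mul_left_eq_self (fun k => (ψ k : ℂ)) a]
    simp only [map_mul, Circle.coe_mul]
  exact (mul_left_eq_self₀.mp hfix).resolve_left (Circle.coe_eq_one.not.mpr ha)

lemma integral_trigPoly [OpensMeasurableSpace K] [IsFiniteMeasure ν] :
    ∫ k, trigPoly s c χ k ∂ν = ∑ i ∈ s, c i * ∫ k, (χ i k : ℂ) ∂ν := by
  have hχ (i : ι) : Integrable (fun k => (χ i k : ℂ)) ν :=
    .of_bound (by fun_prop) 1 (.of_forall fun k => (Circle.norm_coe _).le)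
  simp only [trigPoly, integral_finsetSum _ fun i _ => (hχ i).const_mul (c i), integral_const_mul]

variable [OpensMeasurableSpace K] [MeasurableMul K] [IsProbabilityMeasure ν]
  [ν.IsMulLeftInvariant]

lemma integral_trigPoly_eq_zero (hχ : ∀ i ∈ s, χ i ≠ 1) : ∫ k, trigPoly s c χ k ∂ν = 0 := by
  rw [integral_trigPoly]
  exact Finset.sum_eq_zero fun i hi => by rw [integral_character_eq_zero ν (hχ i hi), mul_zero]

lemma integral_trigPoly_sq_eq_zero (hχ : ∀ i ∈ s, ∀ j ∈ s, χ i * χ j ≠ 1) :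
    ∫ k, trigPoly s c χ k ^ 2 ∂ν = 0 := by
  simp only [trigPoly_sq]
  refine integral_trigPoly_eq_zero _ _ _ ν fun ij hij => ?_
  exact hχ _ (Finset.mem_product.mp hij).1 _ (Finset.mem_product.mp hij).2

lemma integral_norm_trigPoly_sq (hinj : Set.InjOn χ s) :
    ∫ k, ‖trigPoly s c χ k‖ ^ 2 ∂ν = ∑ i ∈ s, ‖c i‖ ^ 2 := by
  apply ofReal_injective
  simp only [← integral_complex_ofReal, ofReal_norm_trigPoly_sq, integral_trigPoly,
    Finset.sum_product, ofReal_sum]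
  refine Finset.sum_congr rfl fun i hi => ?_
  rw [Finset.sum_eq_single_of_mem i hi fun j hj hji => ?_]
  · simp only [mul_inv_cancel, ContinuousMonoidHom.coe_one, Pi.one_apply, Circle.coe_one,
      integral_const, probReal_univ, one_smul, mul_one, mul_conj', ofReal_pow]
  · have hne : χ i * (χ j)⁻¹ ≠ 1 := fun h => hji (hinj hj hi (mul_inv_eq_one.mp h).symm)
    rw [integral_character_eq_zero ν hne, mul_zero]

lemma norm_trigPoly_sq_le (hinj : Set.InjOn χ s) (k : K) :
    ‖trigPoly s c χ k‖ ^ 2 ≤ s.card * ∫ k, ‖trigPoly s c χ k‖ ^ 2 ∂ν :=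
  calc ‖trigPoly s c χ k‖ ^ 2 ≤ (∑ i ∈ s, ‖c i‖) ^ 2 := by
        gcongr
        exact norm_trigPoly_le s c χ k
    _ ≤ s.card * ∑ i ∈ s, ‖c i‖ ^ 2 := sq_sum_le_card_mul_sum_sq
    _ = s.card * ∫ k, ‖trigPoly s c χ k‖ ^ 2 ∂ν := by rw [integral_norm_trigPoly_sq s c χ ν hinj]

theorem integral_norm_trigPoly_sq_le_ρ (hinj : Set.InjOn χ s)
    (hχ : ∀ i ∈ s, ∀ j ∈ s, χ i * χ j ≠ 1) :
    ∫ k, ‖trigPoly s c χ k‖ ^ 2 ∂ν ≤ 18 * s.card * ∫ k, ρ (trigPoly s c χ k) ^ 2 ∂ν := by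
  rcases s.eq_empty_or_nonempty with rfl | hs
  · simp [trigPoly]
  have hne : ∀ i ∈ s, χ i ≠ 1 := fun i hi h => hχ i hi i hi (by rw [h, one_mul])
  exact integral_norm_sq_le_of_moments_eq_zero (continuous_trigPoly s c χ).aestronglyMeasurable
    (mod_cast hs.card_pos) (integral_trigPoly_eq_zero s c χ ν hne)
    (integral_trigPoly_sq_eq_zero s c χ ν hχ) (.of_forall (norm_trigPoly_sq_le s c χ ν hinj))

end TrigPoly

section OrbitAverage

variable {K X : Type*} [MeasurableSpace K] [MeasurableSpace X] [SMul K X] [MeasurableSMul₂ K X]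
  (ν : Measure K) [IsProbabilityMeasure ν] {μ : Measure X} [SFinite μ] [SMulInvariantMeasure K X μ]

lemma measurePreserving_smul_prod :
    MeasurePreserving (fun z : K × X => z.1 • z.2) (ν.prod μ) μ :=
  measurePreserving_snd.comp <| (MeasurePreserving.id ν).skew_product measurable_smul <|
    .of_forall fun k => (measurePreserving_smul k μ).map_eq

lemma integrable_smul_prod {f : X → ℝ} (hf : Integrable f μ) :
    Integrable (fun z : K × X => f (z.1 • z.2)) (ν.prod μ) :=
  (measurePreserving_smul_prod ν).integrable_comp_of_integrable hf

lemma integral_integral_smul {f : X → ℝ} (hf : Integrable f μ) :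
    ∫ x, ∫ k, f (k • x) ∂ν ∂μ = ∫ x, f x ∂μ := by
  have hmap := (measurePreserving_smul_prod ν (μ := μ)).map_eq
  rw [← integral_prod_symm _ (integrable_smul_prod ν hf)]
  conv_rhs => rw [← hmap]
  exact (integral_map measurable_smul.aemeasurable (hmap.symm ▸ hf.1)).symm

lemma integral_mono_of_orbit_average_le {f h : X → ℝ} (hf : Integrable f μ) (hh : Integrable h μ)
    (hle : ∀ x, ∫ k, f (k • x) ∂ν ≤ ∫ k, h (k • x) ∂ν) :
    ∫ x, f x ∂μ ≤ ∫ x, h x ∂μ := by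
  rw [← integral_integral_smul ν hf, ← integral_integral_smul ν hh]
  exact integral_mono (integrable_smul_prod ν hf).integral_prod_right
    (integrable_smul_prod ν hh).integral_prod_right hle

end OrbitAverage

instance isProbabilityMeasure_haarMeasure_top {K : Type*} [Group K] [TopologicalSpace K]
    [IsTopologicalGroup K] [CompactSpace K] [MeasurableSpace K] [BorelSpace K] :
    IsProbabilityMeasure (Measure.haarMeasure (⊤ : PositiveCompacts K)) :=
  ⟨Measure.haarMeasure_self⟩

theorem stmt16_general {K X ι : Type*} [Group K] [TopologicalSpace K] [IsTopologicalGroup K]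
    [CompactSpace K] [MeasurableSpace K] [BorelSpace K] [MeasurableSpace X] [SMul K X]
    [MeasurableSMul₂ K X] (μ : Measure X) [SFinite μ] [SMulInvariantMeasure K X μ]
    (s : Finset ι) (χ : ι → K →ₜ* Circle) (hinj : Set.InjOn χ s)
    (hχ : ∀ i ∈ s, ∀ j ∈ s, χ i * χ j ≠ 1) (g : ι → X → ℂ)
    (hg : ∀ i ∈ s, ∀ k x, g i (k • x) = χ i k * g i x)
    (hL2 : MemLp (fun x => ∑ i ∈ s, g i x) 2 μ) :
    ∫ x, ‖∑ i ∈ s, g i x‖ ^ 2 ∂μ ≤ 18 * s.card * ∫ x, ρ (∑ i ∈ s, g i x) ^ 2 ∂μ := by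
  let ν : Measure K := Measure.haarMeasure ⊤
  have horbit (x : X) (k : K) : ∑ i ∈ s, g i (k • x) = trigPoly s (g · x) χ k :=
    Finset.sum_congr rfl fun i hi => by rw [hg i hi, mul_comm]
  rw [← integral_const_mul]
  refine integral_mono_of_orbit_average_le ν hL2.norm.integrable_sq
    ((integrable_ρ_sq hL2).const_mul _) fun x => ?_
  simp only [horbit, integral_const_mul]
  exact integral_norm_trigPoly_sq_le_ρ s (g · x) χ ν hinj hχ

section CirclePowers

noncomputable instance instMeasurableSpaceCircle : MeasurableSpace Circle := borel Circle

instance instBorelSpaceCircle : BorelSpace Circle := ⟨rfl⟩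

instance instMeasurableSMul₂Circle {X : Type*} [TopologicalSpace X] [SecondCountableTopology X]
    [MeasurableSpace X] [BorelSpace X] [SMul Circle X] [ContinuousSMul Circle X] :
    MeasurableSMul₂ Circle X :=
  ⟨continuous_smul.measurable⟩

/-- The character `u ↦ u ^ n` of the circle group, by which `u` acts on homogeneous polynomials
of degree `n`. -/
noncomputable def circlePow (n : ℕ) : Circle →ₜ* Circle :=
  ContinuousMonoidHom.id Circle ^ n

lemma circlePow_apply (n : ℕ) (u : Circle) : circlePow n u = u ^ n :=
  ContinuousMonoidHom.pow_apply _ _ _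

lemma circlePow_ne_one {n : ℕ} (hn : 0 < n) : circlePow n ≠ 1 := by
  intro h
  have hn0 : (n : ℝ) ≠ 0 := Nat.cast_ne_zero.mpr hn.ne'
  have hpi : circlePow n (Circle.exp (Real.pi / n)) = Circle.exp Real.pi := by
    rw [circlePow_apply, ← Circle.exp_natCast_mul, mul_div_cancel₀ _ hn0]
  exact Circle.exp_pi_ne_one <| hpi.symm.trans (DFunLike.congr_fun h _)

lemma circlePow_injective : Function.Injective circlePow :=
  injective_pow_iff_not_isOfFinOrder.mpr fun h =>
    let ⟨_, hn, hpow⟩ := isOfFinOrder_iff_pow_eq_one.mp h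
    circlePow_ne_one hn hpow

lemma circlePow_mul_circlePow_ne_one {n m : ℕ} (hn : 0 < n) : circlePow n * circlePow m ≠ 1 := by
  rw [circlePow, circlePow, ← pow_add]
  exact circlePow_ne_one (Nat.add_pos_left hn m)

end CirclePowers

lemma smulInvariantMeasure_withDensity {M α : Type*} [MeasurableSpace α] [SMul M α]
    [MeasurableConstSMul M α] (μ : Measure α) [SMulInvariantMeasure M α μ] {f : α → ENNReal}
    (hf : Measurable f) (hinv : ∀ (c : M) a, f (c • a) = f a) :
    SMulInvariantMeasure M α (μ.withDensity f) where
  measure_preimage_smul c t ht := by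
    rw [withDensity_apply _ ht, withDensity_apply _ (measurable_const_smul c ht),
      ← (measurePreserving_smul c μ).setLIntegral_comp_preimage ht hf]
    simp only [hinv]

section Homogeneous

lemma eval_smul_of_isHomogeneous {σ R : Type*} [CommSemiring R] {q : MvPolynomial σ R} {n : ℕ}
    (hq : q.IsHomogeneous n) (u : R) (z : σ → R) :
    MvPolynomial.eval (u • z) q = u ^ n * MvPolynomial.eval z q := by
  simp only [MvPolynomial.eval_eq, Finset.mul_sum]
  refine Finset.sum_congr rfl fun m hm => ?_
  have hdeg : ∑ i ∈ m.support, m i = n := (hq.degree_eq_sum_deg_support hm).symm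
  simp only [Pi.smul_apply, smul_eq_mul, mul_pow, Finset.prod_mul_distrib,
    Finset.prod_pow_eq_pow_sum, hdeg, mul_left_comm]

lemma eval_circle_smul_of_isHomogeneous {σ : Type*} {q : MvPolynomial σ ℂ} {n : ℕ}
    (hq : q.IsHomogeneous n) (u : Circle) (z : σ → ℂ) :
    MvPolynomial.eval (u • z) q = circlePow n u * MvPolynomial.eval z q := by
  rw [circlePow_apply, Circle.coe_pow]
  exact eval_smul_of_isHomogeneous hq u z

end Homogeneous

section Sphere

variable {d : ℕ}

lemma l2norm_circle_smul (u : Circle) (z : Fin d → ℂ) : l2norm (u • z) = l2norm z := by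
  simp only [l2norm, Circle.smul_def, Pi.smul_apply, norm_smul, Circle.norm_coe, one_mul]

lemma norm_apply_le_l2norm (z : Fin d → ℂ) (q : Fin d) : ‖z q‖ ≤ l2norm z :=
  Real.le_sqrt_of_sq_le <|
    Finset.single_le_sum (f := fun q => ‖z q‖ ^ 2) (fun _ _ => sq_nonneg _) (Finset.mem_univ q)

lemma norm_inv_l2norm_smul_le_one (z : Fin d → ℂ) : ‖(l2norm z)⁻¹ • z‖ ≤ 1 := by
  have h0 : 0 ≤ l2norm z := Real.sqrt_nonneg _
  refine (pi_norm_le_iff_of_nonneg zero_le_one).mpr fun q => ?_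
  rw [Pi.smul_apply, norm_smul, norm_inv, Real.norm_of_nonneg h0]
  exact inv_mul_le_one_of_le₀ (norm_apply_le_l2norm z q) h0

lemma measurable_inv_l2norm_smul : Measurable fun z : Fin d → ℂ => (l2norm z)⁻¹ • z := by
  unfold l2norm
  fun_prop

instance smulInvariantMeasure_circle_volume :
    SMulInvariantMeasure Circle (Fin d → ℂ) volume where
  measure_preimage_smul u _ ht :=
    (volume_preserving_pi fun _ : Fin d => (rotation u).measurePreserving).measure_preimage
      ht.nullMeasurableSet

instance smulInvariantMeasure_circle_gaussianCd :
    SMulInvariantMeasure Circle (Fin d → ℂ) (gaussianCd d) :=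
  smulInvariantMeasure_withDensity _ (by fun_prop) fun u z => by
    simp only [Circle.smul_def, Pi.smul_apply, norm_smul, Circle.norm_coe, one_mul]

instance smulInvariantMeasure_circle_sphereMeasure :
    SMulInvariantMeasure Circle (Fin d → ℂ) (sphereMeasure d) :=
  smulInvariantMeasure_map _ _
    (fun u z => by rw [l2norm_circle_smul, smul_comm]) measurable_inv_l2norm_smul

lemma integrable_exp_neg_sum_norm_sq :
    Integrable fun z : Fin d → ℂ => Real.exp (-∑ q, ‖z q‖ ^ 2) := by
  have hone : Integrable fun w : ℂ => Real.exp (-‖w‖ ^ 2) := by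
    simpa [norm_exp, ← ofReal_pow] using
      (GaussianFourier.integrable_cexp_neg_mul_sq_norm_add (V := ℂ) (b := 1) (by simp) 0 0).norm
  simp only [← Finset.sum_neg_distrib, Real.exp_sum]
  exact Integrable.fintype_prod fun _ => hone

instance isFiniteMeasure_gaussianCd : IsFiniteMeasure (gaussianCd d) :=
  isFiniteMeasure_withDensity_ofReal (integrable_exp_neg_sum_norm_sq.const_mul _).2

instance isFiniteMeasure_sphereMeasure : IsFiniteMeasure (sphereMeasure d) := by
  unfold sphereMeasure
  infer_instance

lemma ae_norm_le_one_sphereMeasure : ∀ᵐ ω ∂sphereMeasure d, ‖ω‖ ≤ 1 := by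
  rw [sphereMeasure, ae_map_iff measurable_inv_l2norm_smul.aemeasurable
    (measurableSet_le measurable_norm measurable_const)]
  exact .of_forall norm_inv_l2norm_smul_le_one

lemma memLp_sphereMeasure {F : Type*} [NormedAddCommGroup F] {f : (Fin d → ℂ) → F}
    (hf : Continuous f) (p : ENNReal) : MemLp f p (sphereMeasure d) := by
  obtain ⟨C, hC⟩ := (isCompact_closedBall (0 : Fin d → ℂ) 1).exists_bound_of_continuousOn
    hf.continuousOn
  refine .of_bound hf.aestronglyMeasurable C ?_
  filter_upwards [ae_norm_le_one_sphereMeasure] with ω hω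
  exact hC ω (mem_closedBall_zero_iff.mpr hω)

end Sphere

/-- **Lifted local circle estimate.** Let `E ⊂ ℤ_{≥1}` be finite with `|E| = L`, and let
`P = Σ_{n ∈ E} G_n` where each `G_n` is (the restriction to `S^{2d−1}` of) a homogeneous
holomorphic polynomial of degree `n` on `ℂ^d`. Then
`‖P‖²_{L²(S^{2d−1})} ≤ 144 L ‖ρ ∘ P‖²_{L²(S^{2d−1})}`. -/
theorem stmt16 (d : ℕ) (hd : 1 ≤ d) (E : Finset ℕ) (hE : ∀ n ∈ E, 1 ≤ n)
    (G : ℕ → MvPolynomial (Fin d) ℂ) (hG : ∀ n ∈ E, (G n).IsHomogeneous n) :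
    (∫ ω, ‖∑ n ∈ E, MvPolynomial.eval ω (G n)‖ ^ 2 ∂(sphereMeasure d))
      ≤ 144 * E.card *
        ∫ ω, (ρ (∑ n ∈ E, MvPolynomial.eval ω (G n))) ^ 2 ∂(sphereMeasure d) := by
  refine (stmt16_general (sphereMeasure d) E circlePow circlePow_injective.injOn
    (fun n hn _ _ => circlePow_mul_circlePow_ne_one (hE n hn)) (fun n ω => (G n).eval ω)
    (fun n hn => eval_circle_smul_of_isHomogeneous (hG n hn))
    (memLp_sphereMeasure (continuous_finsetSum _ fun n _ => (G n).continuous_eval) 2)).trans ?_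
  gcongr
  norm_num
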